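/- arXiv:1507.03046 — 4 statements merged into one kernel-verified Lean document; each statement's English description precedes it below -/
import Mathlib

section
/- Let D and Y be finite totally ordered sets of equal size, let π : D → Y be a bijection, and let 𝒟 = (D_1,…,D_k) and 𝒴 = (Y_1,…,Y_k) be ordered partitions of D and Y such that π(D_j) = Y_j for every j; let π_j : D_j → Y_j denote the restriction of π. Then sgn(π) = sgn(𝒟) · sgn(𝒴) · ∏_{j=1}^{k} sgn(π_j). -/
/-! Attach to each `a` the index `c a` of its block and set `w a = (c a, a)`, ordered
lexicographically. Signs are multiplicative, because a pair reversed twice keeps its order, so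
`sgn π` is the product of the signs of `w a ↦ a` and `w a ↦ π a`. The first map reverses exactly the
pairs counted by `N(𝒟)`; the second reverses the pairs counted by `N(𝒴)` together with the
inversions of `π` inside a single block. -/

open scoped Classical

/-- The number of inversions N(π) of a bijection π : D → Y between finite subsets of
linearly ordered types: #{(a,a') ∈ D² : a < a' and π(a) > π(a')}. -/
noncomputable def invCount {A X : Type*} [Fintype A] [LinearOrder A] [LinearOrder X]
    {D : Finset A} {Y : Finset X} (π : {a // a ∈ D} ≃ {x // x ∈ Y}) : ℕ :=
  (Finset.univ.filter fun p : {a // a ∈ D} × {a // a ∈ D} =>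
    p.1.val < p.2.val ∧ (π p.2).val < (π p.1).val).card

/-- The number of inversions of the restriction π_j of π to a subset S ⊆ D:
#{(a,a') ∈ S² : a < a' and π(a) > π(a')}. -/
noncomputable def invCountOn {A X : Type*} [Fintype A] [LinearOrder A] [LinearOrder X]
    {D : Finset A} {Y : Finset X} (π : {a // a ∈ D} ≃ {x // x ∈ Y}) (S : Finset A) : ℕ :=
  (Finset.univ.filter fun p : {a // a ∈ D} × {a // a ∈ D} =>
    p.1.val ∈ S ∧ p.2.val ∈ S ∧ p.1.val < p.2.val ∧ (π p.2).val < (π p.1).val).card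

/-- Number of "crossing" pairs between two finsets: #{(y,y') ∈ Y₁ × Y₂ : y > y'}. -/
def crossInv {β : Type*} [LinearOrder β] (Y₁ Y₂ : Finset β) : ℕ :=
  ((Y₁ ×ˢ Y₂).filter fun q => q.2 < q.1).card

/-- N(𝒴) for an ordered partition given as a list (Y_1,…,Y_k):
#{(y_i,y_j) : y_i ∈ Y_i, y_j ∈ Y_j, i < j, y_i > y_j}.  sgn(𝒴) = (−1)^{listInv 𝒴}. -/
def listInv {β : Type*} [LinearOrder β] : List (Finset β) → ℕ
  | [] => 0
  | Z :: L => (L.map (crossInv Z)).sum + listInv L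

section Inversions

open Finset

lemma card_filter_eq_eq_sum {α ι : Type*} [Fintype ι] [DecidableEq ι] (s : Finset α)
    (f g : α → ι) :
    #{a ∈ s | f a = g a} = ∑ j, #{a ∈ s | f a = j ∧ g a = j} := by
  rw [card_eq_sum_card_fiberwise (f := f) fun _ _ => mem_univ _]
  refine sum_congr rfl fun j _ => ?_
  rw [filter_filter]
  congr 1
  grind

/-- The inversions of the correspondence `u a ↦ v a` between the values of two maps into linear
orders, as pairs of points of `α` listed in increasing order of `u`. Injectivity of `u` and `v` is
not built in, so that one of them may record the index of a block: pairs tied under `u` or `v` do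
not count. -/
def inversions {α β γ : Type*} [Fintype α] [LinearOrder β] [LinearOrder γ]
    (u : α → β) (v : α → γ) : Finset (α × α) :=
  {p | u p.1 < u p.2 ∧ v p.2 < v p.1}

variable {α β γ δ ι : Type*} [Fintype α] [LinearOrder β] [LinearOrder γ] [LinearOrder δ]
  [LinearOrder ι]

@[simp]
lemma mem_inversions {u : α → β} {v : α → γ} {p : α × α} :
    p ∈ inversions u v ↔ u p.1 < u p.2 ∧ v p.2 < v p.1 := by
  simp [inversions]

lemma card_inversions_comm (u : α → β) (v : α → γ) :
    #(inversions u v) = #(inversions v u) :=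
  card_equiv (Equiv.prodComm α α) fun p => by simp [and_comm]

lemma card_inversions_eq_card_inter_add_card_inter (u : α → β) (v : α → γ) {w : α → δ}
    (hw : Function.Injective w) :
    #(inversions u v) =
      #(inversions u v ∩ inversions w v) + #(inversions u v ∩ inversions u w) := by
  rw [← card_union_of_disjoint]
  · congr 1
    ext p
    have hwp : w p.1 = w p.2 → p.1 = p.2 := @hw _ _
    simp only [mem_union, mem_inter, mem_inversions]
    grind
  · simp only [disjoint_left, mem_inter, mem_inversions]
    grind

lemma neg_one_pow_card_inversions_trans {u : α → β} {v : α → γ} {w : α → δ}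
    (hu : Function.Injective u) (hv : Function.Injective v) (hw : Function.Injective w) :
    (-1 : ℤ) ^ #(inversions u w) = (-1) ^ #(inversions u v) * (-1) ^ #(inversions v w) := by
  have huw := card_inversions_eq_card_inter_add_card_inter u w hv
  have huv := card_inversions_eq_card_inter_add_card_inter u v hw
  have hvw := card_inversions_eq_card_inter_add_card_inter v w hu
  have hcancel : #(inversions v w ∩ inversions v u) = #(inversions u v ∩ inversions w v) :=
    card_equiv (Equiv.prodComm α α) fun p => by
      simp only [mem_inter, mem_inversions, Equiv.prodComm_apply, Prod.fst_swap, Prod.snd_swap]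
      tauto
  have hsum : #(inversions u v) + #(inversions v w) =
      #(inversions u w) + 2 * #(inversions u v ∩ inversions w v) := by
    grind [inter_comm]
  rw [← pow_add, hsum, pow_add, pow_mul, neg_one_sq, one_pow, mul_one]

lemma inversions_toLex_right_self (c : α → ι) (u : α → β) :
    inversions (fun a => toLex (c a, u a)) u = inversions c u := by
  ext p
  simp only [mem_inversions, Prod.Lex.toLex_lt_toLex]
  grind

lemma card_inversions_toLex [Fintype ι] (c : α → ι) (u : α → β) (v : α → γ) :
    #(inversions (fun a => toLex (c a, u a)) v) =
      #(inversions c v) + ∑ j, #{p ∈ inversions u v | c p.1 = j ∧ c p.2 = j} := by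
  rw [← card_filter_eq_eq_sum, ← card_union_of_disjoint]
  · congr 1
    ext p
    simp only [mem_inversions, Prod.Lex.toLex_lt_toLex, mem_union, mem_filter]
    grind
  · simp only [disjoint_left, mem_filter, mem_inversions]
    grind

lemma neg_one_pow_card_inversions_eq_mul_prod [Fintype ι] (c : α → ι) {u : α → β} {v : α → γ}
    (hu : Function.Injective u) (hv : Function.Injective v) :
    (-1 : ℤ) ^ #(inversions u v) =
      (-1) ^ #(inversions c u) * (-1) ^ #(inversions c v) *
        ∏ j, (-1) ^ #{p ∈ inversions u v | c p.1 = j ∧ c p.2 = j} := by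
  have hlex : Function.Injective fun a => toLex (c a, u a) :=
    fun _ _ h => hu (congrArg (fun x => (ofLex x).2) h)
  rw [neg_one_pow_card_inversions_trans hu hlex hv, card_inversions_comm u,
    inversions_toLex_right_self, card_inversions_toLex, pow_add, prod_pow_eq_pow_sum, mul_assoc]

end Inversions

section OrderedPartitions

open Finset

lemma crossInv_map {α β : Type*} [LinearOrder β] (s t : Finset α) (u : α ↪ β) :
    crossInv (s.map u) (t.map u) = #{p ∈ s ×ˢ t | u p.2 < u p.1} := by
  rw [crossInv, ← prodMap_map_product, filter_map, card_map]
  rfl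

lemma listInv_map_finRange {β : Type*} [LinearOrder β] {k : ℕ} (f : Fin k → Finset β) :
    listInv ((List.finRange k).map f) = ∑ i, ∑ j ∈ Ioi i, crossInv (f i) (f j) := by
  induction k with
  | zero => simp [listInv]
  | succ k ih =>
    rw [List.finRange_succ, List.map_cons, List.map_map, listInv, ih, Fin.sum_univ_succ]
    simp [Fin.sum_Ioi_succ, ← List.ofFn_eq_map, List.sum_ofFn]

lemma listInv_map_fibers {α β : Type*} [Fintype α] [LinearOrder β] {k : ℕ} (c : α → Fin k)
    (u : α ↪ β) :
    listInv ((List.finRange k).map fun j => Finset.map u {a | c a = j}) = #(inversions c u) := by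
  have hmaps : (inversions c u : Set (α × α)).MapsTo
      (fun p => (⟨c p.1, c p.2⟩ : Σ _ : Fin k, Fin k))
      ((univ : Finset (Fin k)).sigma Ioi : Finset _) :=
    fun p hp => by simpa using (mem_inversions.mp hp).1
  rw [listInv_map_finRange, sum_sigma', card_eq_sum_card_fiberwise hmaps]
  refine sum_congr rfl fun ⟨i, j⟩ hij => ?_
  rw [crossInv_map]
  congr 1
  ext p
  have hlt : i < j := by simpa using hij
  simp only [mem_filter, mem_product, mem_univ, true_and, mem_inversions, Sigma.mk.injEq, heq_eq_eq]
  grind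

lemma invCountOn_eq_card_filter_inversions {A X : Type*} [Fintype A] [LinearOrder A]
    [LinearOrder X] {D : Finset A} {Y : Finset X} (π : {a // a ∈ D} ≃ {x // x ∈ Y})
    (S : Finset A) :
    invCountOn π S =
      #{p ∈ inversions (fun a => a.val) (fun a => (π a).val) | p.1.val ∈ S ∧ p.2.val ∈ S} := by
  rw [invCountOn, inversions, filter_filter]
  congr 1
  ext p
  simp only [mem_filter, mem_univ, true_and]
  tauto

lemma exists_index_of_partition {α ι : Type*} [DecidableEq α] [Fintype ι] {D : Finset α}
    {Ds : ι → Finset α} (hdisj : Pairwise fun i j => Disjoint (Ds i) (Ds j))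
    (hunion : univ.biUnion Ds = D) :
    ∃ c : {a // a ∈ D} → ι, ∀ a j, a.val ∈ Ds j ↔ c a = j := by
  have hcover (a : {a // a ∈ D}) : ∃ j, a.val ∈ Ds j := by
    simpa using hunion.symm.subset a.2
  choose c hc using hcover
  refine ⟨c, fun a j => ⟨fun hj => ?_, fun hj => hj ▸ hc a⟩⟩
  by_contra hne
  exact disjoint_left.mp (hdisj hne) (hc a) hj

lemma eq_map_filter_univ {α β : Type*} [Fintype α] {p : α → Prop} [DecidablePred p]
    {s : Finset β} {u : α ↪ β} (hs : ∀ x ∈ s, ∃ a, u a = x) (hp : ∀ a, u a ∈ s ↔ p a) :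
    s = Finset.map u {a | p a} := by
  ext x
  simp only [mem_map, mem_filter, mem_univ, true_and]
  refine ⟨fun hx => ?_, fun ⟨a, ha, hax⟩ => hax ▸ (hp a).mpr ha⟩
  obtain ⟨a, rfl⟩ := hs x hx
  exact ⟨a, (hp a).mp hx, rfl⟩

end OrderedPartitions

open Finset in
theorem sgn_of_partitioned_bijection_general {A X : Type*}
    [Fintype A] [LinearOrder A] [LinearOrder X]
    (D : Finset A) (Y : Finset X) (π : {a // a ∈ D} ≃ {x // x ∈ Y})
    (k : ℕ) (Ds : Fin k → Finset A) (Ys : Fin k → Finset X)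
    (hDdisj : ∀ i j, i ≠ j → Disjoint (Ds i) (Ds j))
    (hDunion : Finset.univ.biUnion Ds = D)
    (hYunion : Finset.univ.biUnion Ys = Y)
    (hmap : ∀ (j : Fin k) (a : {a // a ∈ D}), a.val ∈ Ds j ↔ (π a).val ∈ Ys j) :
    ((-1 : ℤ) ^ invCount π) =
      (-1 : ℤ) ^ listInv ((List.finRange k).map Ds) *
        (-1 : ℤ) ^ listInv ((List.finRange k).map Ys) *
        ∏ j : Fin k, (-1 : ℤ) ^ invCountOn π (Ds j) := by
  obtain ⟨c, hc⟩ := exists_index_of_partition (fun i j => hDdisj i j) hDunion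
  let u : {a // a ∈ D} ↪ A := .subtype _
  let v : {a // a ∈ D} ↪ X := π.toEmbedding.trans (.subtype _)
  have hDs : Ds = fun j => map u {a | c a = j} := funext fun j =>
    eq_map_filter_univ
      (fun x hx => ⟨⟨x, hDunion ▸ mem_biUnion.mpr ⟨j, mem_univ j, hx⟩⟩, rfl⟩)
      (hc · j)
  have hYs : Ys = fun j => map v {a | c a = j} := funext fun j =>
    eq_map_filter_univ
      (fun x hx => ⟨π.symm ⟨x, hYunion ▸ mem_biUnion.mpr ⟨j, mem_univ j, hx⟩⟩,
        by simp [v]⟩)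
      fun a => (hmap j a).symm.trans (hc a j)
  have hblock (j : Fin k) : invCountOn π (Ds j) =
      #{p ∈ inversions u v | c p.1 = j ∧ c p.2 = j} := by
    rw [invCountOn_eq_card_filter_inversions]
    simp only [hc]
    rfl
  simp only [hblock]
  rw [hDs, hYs, listInv_map_fibers, listInv_map_fibers]
  exact neg_one_pow_card_inversions_eq_mul_prod c u.injective v.injective

/-- if π : D → Y is a bijection compatible with ordered partitions
𝒟 = (D_1,…,D_k) of D and 𝒴 = (Y_1,…,Y_k) of Y (i.e. π(D_j) = Y_j), then
sgn(π) = sgn(𝒟) · sgn(𝒴) · ∏_j sgn(π_j), where π_j is the restriction of π to D_j. -/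
theorem sgn_of_partitioned_bijection {A X : Type*}
    [Fintype A] [LinearOrder A] [Fintype X] [LinearOrder X]
    (D : Finset A) (Y : Finset X) (π : {a // a ∈ D} ≃ {x // x ∈ Y})
    (k : ℕ) (Ds : Fin k → Finset A) (Ys : Fin k → Finset X)
    (hDdisj : ∀ i j, i ≠ j → Disjoint (Ds i) (Ds j))
    (hDunion : Finset.univ.biUnion Ds = D)
    (hYdisj : ∀ i j, i ≠ j → Disjoint (Ys i) (Ys j))
    (hYunion : Finset.univ.biUnion Ys = Y)
    (hmap : ∀ (j : Fin k) (a : {a // a ∈ D}), a.val ∈ Ds j ↔ (π a).val ∈ Ys j) :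
    ((-1 : ℤ) ^ invCount π) =
      (-1 : ℤ) ^ listInv ((List.finRange k).map Ds) *
        (-1 : ℤ) ^ listInv ((List.finRange k).map Ys) *
        ∏ j : Fin k, (-1 : ℤ) ^ invCountOn π (Ds j) :=
  sgn_of_partitioned_bijection_general D Y π k Ds Ys hDdisj hDunion hYunion hmap
end

section
/- Let M be a matrix over a commutative ring with rows indexed by a finite set A and columns by a finite set X, and fix subsets A' ⊆ A and X' ⊆ X. For D ⊆ A and Y ⊆ X with |D| = |Y|, let perm*(D,Y) := Σ_π ∏_{a∈D} M_{a,π(a)}, the sum over all bijections π : D → Y such that no a ∈ D satisfies both a ∈ A' and π(a) ∈ X'. Then perm*(D,Y) = Σ_{D' ⊆ D∩A', Y' ⊆ Y∩X'} (−1)^{|D'|} · perm(D',Y') · perm(D \ D', Y \ Y'). -/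
/-!
By inclusion–exclusion over the rows `a ∈ D ∩ A'`, `perm*(D,Y)` is the alternating sum over
`D' ⊆ D ∩ A'` of the contributions of those bijections `π : D → Y` that map `D'` into `X'`.
For fixed `D'`, sort these bijections by the image `Y' = π(D') ⊆ Y ∩ X'`: a bijection `D → Y` with
`π(D') = Y'` is a pair of bijections `D' → Y'` and `D \ D' → Y \ Y'`, so the contribution of each
`Y'` is `perm(D',Y') · perm(D \ D', Y \ Y')`. This second step is a Laplace expansion.
-/

open scoped Classical

/-- The partial permanent perm(D,Y): the sum over all bijections π : D → Y of
∏_{a ∈ D} M_{a,π(a)}; 0 when |D| ≠ |Y| and 1 when D = Y = ∅. -/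
noncomputable def pperm {R A X : Type*} [CommRing R] [Fintype A] [Fintype X]
    (M : A → X → R) (D : Finset A) (Y : Finset X) : R :=
  ∑ π : {a // a ∈ D} ≃ {x // x ∈ Y}, ∏ a : {a // a ∈ D}, M a.val (π a).val

/-- The restricted partial permanent perm*(D,Y) relative to A' ⊆ A, X' ⊆ X:
the sum over all bijections π : D → Y such that no a ∈ D has both a ∈ A' and π(a) ∈ X'. -/
noncomputable def ppermStar {R A X : Type*} [CommRing R] [Fintype A] [Fintype X]
    (M : A → X → R) (A' : Finset A) (X' : Finset X) (D : Finset A) (Y : Finset X) : R :=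
  ∑ π : {a // a ∈ D} ≃ {x // x ∈ Y},
    if ∀ a : {a // a ∈ D}, ¬(a.val ∈ A' ∧ (π a).val ∈ X') then
      ∏ a : {a // a ∈ D}, M a.val (π a).val
    else 0

section Permanent

variable {R α β : Type*}

/-- A bijection `π : α ≃ β` under which the subtypes `p` and `q` correspond amounts to a bijection
between these subtypes together with one between their complements. -/
def equivSubtypeProdEquiv (p : α → Prop) (q : β → Prop) [DecidablePred p] [DecidablePred q] :
    {π : α ≃ β // ∀ a, p a ↔ q (π a)} ≃
      ({a // p a} ≃ {b // q b}) × ({a // ¬p a} ≃ {b // ¬q b}) where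
  toFun π := (π.1.subtypeEquiv π.2, π.1.subtypeEquiv fun a => not_congr (π.2 a))
  invFun e := ⟨(Equiv.sumCompl p).symm.trans ((e.1.sumCongr e.2).trans (Equiv.sumCompl q)), by
    intro a
    by_cases ha : p a
    · simpa [ha] using (e.1 ⟨a, ha⟩).2
    · simpa [ha] using (e.2 ⟨a, ha⟩).2⟩
  left_inv π := by
    ext a
    by_cases ha : p a <;> simp [ha]
  right_inv e := by
    ext a <;> simp [a.2]

/-- The part of the permanent of the matrix `N`, with rows `α` and columns `β`, that comes from the
bijections in `P`. It is `0` when `α` and `β` have different cardinalities. -/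
noncomputable def permanentOn [CommSemiring R] [Fintype α] [Fintype β] [DecidableEq α]
    [DecidableEq β] (N : α → β → R) (P : Set (α ≃ β)) : R :=
  ∑ π : α ≃ β with π ∈ P, ∏ a, N a (π a)

variable [Fintype α] [Fintype β] [DecidableEq α] [DecidableEq β]

theorem permanentOn_subtype_mul_permanentOn_subtype_not [CommSemiring R] (N : α → β → R)
    (p : α → Prop) (q : β → Prop) [DecidablePred p] [DecidablePred q] :
    permanentOn (fun (a : {a // p a}) (b : {b // q b}) => N a b) Set.univ *
        permanentOn (fun (a : {a // ¬p a}) (b : {b // ¬q b}) => N a b) Set.univ =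
      permanentOn N {π | ∀ a, p a ↔ q (π a)} := by
  simp only [permanentOn, Set.mem_univ, Finset.filter_true]
  rw [Finset.sum_mul_sum, ← Finset.sum_product', Finset.univ_product_univ,
    Finset.sum_subtype (p := fun π : α ≃ β => ∀ a, p a ↔ q (π a)) _ (by simp)]
  exact (Fintype.sum_equiv (equivSubtypeProdEquiv p q) _ _ fun π =>
    (Fintype.prod_subtype_mul_prod_subtype p fun a => N a (π.1 a)).symm).symm

theorem sum_permanentOn_fiber [CommSemiring R] {ι : Type*}
    (N : α → β → R) (s : Finset ι) (g : (α ≃ β) → ι) :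
    ∑ i ∈ s, permanentOn N {π | g π = i} = permanentOn N {π | g π ∈ s} := by
  simpa [permanentOn] using Finset.sum_fiberwise_eq_sum_filter Finset.univ s g _

theorem permanentOn_forall_notMem [CommRing R] {ι : Type*}
    (N : α → β → R) (s : Finset ι) (Q : ι → Set (α ≃ β)) :
    permanentOn N {π | ∀ i ∈ s, π ∉ Q i} =
      ∑ t ∈ s.powerset, (-1) ^ t.card * permanentOn N {π | ∀ i ∈ t, π ∈ Q i} := by
  have inf_eq (t : Finset ι) (S : ι → Finset (α ≃ β)) :
      t.inf S = ({π | ∀ i ∈ t, π ∈ S i} : Finset (α ≃ β)) := by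
    ext; simp [Finset.mem_inf]
  simpa [permanentOn, inf_eq] using Finset.inclusion_exclusion_sum_inf_compl s
    (fun i => ({π | π ∈ Q i} : Finset (α ≃ β))) fun π => ∏ a, N a (π a)

end Permanent

section PartialPermanent

variable {R A X : Type*} {D S : Finset A} {Y T : Finset X}

/-- The image in `X` of `D ∩ S` under a bijection `π : D ≃ Y`. -/
noncomputable def equivImage (π : {a // a ∈ D} ≃ {x // x ∈ Y}) (S : Finset A) : Finset X :=
  (S.subtype (· ∈ D)).map (π.toEmbedding.trans (Function.Embedding.subtype _))

theorem mem_equivImage {π : {a // a ∈ D} ≃ {x // x ∈ Y}} {x : X} :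
    x ∈ equivImage π S ↔ ∃ a : {a // a ∈ D}, a.val ∈ S ∧ (π a).val = x := by
  simp [equivImage]

theorem equivImage_eq_iff {π : {a // a ∈ D} ≃ {x // x ∈ Y}} (hT : T ⊆ Y) :
    equivImage π S = T ↔ ∀ a, a.val ∈ S ↔ (π a).val ∈ T := by
  constructor
  · rintro rfl a
    simp [mem_equivImage]
  · intro h
    ext x
    rw [mem_equivImage]
    constructor
    · rintro ⟨a, haS, rfl⟩
      exact (h a).1 haS
    · intro hx
      exact ⟨π.symm ⟨x, hT hx⟩, by simp [h, hx], by simp⟩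

theorem equivImage_subset_iff {π : {a // a ∈ D} ≃ {x // x ∈ Y}} :
    equivImage π S ⊆ T ↔ ∀ a, a.val ∈ S → (π a).val ∈ T := by
  simp only [Finset.subset_iff, mem_equivImage]
  grind

theorem equivImage_subset_right (π : {a // a ∈ D} ≃ {x // x ∈ Y}) (S : Finset A) :
    equivImage π S ⊆ Y :=
  equivImage_subset_iff.2 fun a _ => (π a).2

/-- The complement of `S` within the type of elements of `D`, identified with the type of elements
of the finset `D \ S`. -/
def subtypeNotMemEquivSdiff [DecidableEq A] (D S : Finset A) :
    {a : {a // a ∈ D} // a.val ∉ S} ≃ {a // a ∈ D \ S} :=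
  (Equiv.subtypeSubtypeEquivSubtypeInter (· ∈ D) (· ∉ S)).trans
    (Equiv.subtypeEquivRight fun _ => Finset.mem_sdiff.symm)

variable [CommRing R] [Fintype A] [Fintype X]

theorem pperm_eq_permanentOn {α β : Type*} [Fintype α] [Fintype β]
    [DecidableEq α] [DecidableEq β] (M : A → X → R)
    (e : α ≃ {a // a ∈ D}) (f : β ≃ {x // x ∈ Y}) :
    pperm M D Y = permanentOn (fun a b => M (e a) (f b)) Set.univ := by
  simp only [pperm, permanentOn, Set.mem_univ, Finset.filter_true]
  refine (Fintype.sum_equiv (e.equivCongr f) _ _ fun σ => ?_).symm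
  exact Fintype.prod_equiv e _ _ (by simp)

theorem pperm_mul_pperm_sdiff [DecidableEq A] [DecidableEq X] (M : A → X → R)
    (hS : S ⊆ D) (hT : T ⊆ Y) :
    pperm M S T * pperm M (D \ S) (Y \ T) =
      permanentOn (fun (a : {a // a ∈ D}) (x : {x // x ∈ Y}) => M a x)
        {π | equivImage π S = T} := by
  simp only [equivImage_eq_iff hT]
  rw [← permanentOn_subtype_mul_permanentOn_subtype_not _ (fun a : {a // a ∈ D} => a.val ∈ S)
      (fun x : {x // x ∈ Y} => x.val ∈ T),
    pperm_eq_permanentOn M (Equiv.subtypeSubtypeEquivSubtype fun h => hS h)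
      (Equiv.subtypeSubtypeEquivSubtype fun h => hT h),
    pperm_eq_permanentOn M (subtypeNotMemEquivSdiff D S) (subtypeNotMemEquivSdiff Y T)]
  rfl

theorem sum_pperm_mul_pperm_sdiff [DecidableEq A] [DecidableEq X] (M : A → X → R)
    (hS : S ⊆ D) (Z : Finset X) :
    ∑ T ∈ (Y ∩ Z).powerset, pperm M S T * pperm M (D \ S) (Y \ T) =
      permanentOn (fun (a : {a // a ∈ D}) (x : {x // x ∈ Y}) => M a x)
        {π | ∀ a, a.val ∈ S → (π a).val ∈ Z} := by
  have mem_powerset_iff (π : {a // a ∈ D} ≃ {x // x ∈ Y}) :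
      equivImage π S ∈ (Y ∩ Z).powerset ↔ ∀ a, a.val ∈ S → (π a).val ∈ Z := by
    rw [Finset.mem_powerset, Finset.subset_inter_iff, equivImage_subset_iff (T := Z),
      and_iff_right (equivImage_subset_right π S)]
  simp only [← mem_powerset_iff, ← sum_permanentOn_fiber]
  refine Finset.sum_congr rfl fun T hT => pperm_mul_pperm_sdiff M hS ?_
  exact (Finset.mem_powerset.1 hT).trans Finset.inter_subset_left

theorem ppermStar_eq_permanentOn [DecidableEq A] [DecidableEq X] (M : A → X → R)
    (A' : Finset A) (X' : Finset X) (D : Finset A) (Y : Finset X) :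
    ppermStar M A' X' D Y =
      permanentOn (fun (a : {a // a ∈ D}) (x : {x // x ∈ Y}) => M a x)
        {π | ∀ a, ¬(a.val ∈ A' ∧ (π a).val ∈ X')} := by
  rw [ppermStar, permanentOn, Finset.sum_filter]
  congr!

theorem ppermStar_eq_sum_permanentOn [DecidableEq A] [DecidableEq X] (M : A → X → R)
    (A' : Finset A) (X' : Finset X) (D : Finset A) (Y : Finset X) :
    ppermStar M A' X' D Y =
      ∑ S ∈ (D ∩ A').powerset, (-1) ^ S.card *
        permanentOn (fun (a : {a // a ∈ D}) (x : {x // x ∈ Y}) => M a x)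
          {π | ∀ a, a.val ∈ S → (π a).val ∈ X'} := by
  let Q (a : A) : Set ({a // a ∈ D} ≃ {x // x ∈ Y}) := {π | ∃ h : a ∈ D, (π ⟨a, h⟩).val ∈ X'}
  have forall_notMem_Q : {π | ∀ a ∈ D ∩ A', π ∉ Q a} =
      {π | ∀ a, ¬(a.val ∈ A' ∧ (π a).val ∈ X')} := by
    ext π
    simp only [Q, Finset.mem_inter, Set.mem_ofPred_eq, not_exists, Subtype.forall]
    grind
  have forall_mem_Q {S : Finset A} (hS : S ⊆ D) : {π | ∀ a ∈ S, π ∈ Q a} =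
      {π | ∀ a, a.val ∈ S → (π a).val ∈ X'} := by
    ext π
    simp only [Q, Set.mem_ofPred_eq, Subtype.forall]
    grind
  rw [ppermStar_eq_permanentOn, ← forall_notMem_Q, permanentOn_forall_notMem]
  refine Finset.sum_congr rfl fun S hS => ?_
  rw [forall_mem_Q ((Finset.mem_powerset.1 hS).trans Finset.inter_subset_left)]

end PartialPermanent

/-- inclusion–exclusion for the restricted partial permanent:
perm*(D,Y) = Σ_{D' ⊆ D∩A', Y' ⊆ Y∩X'} (−1)^{|D'|} · perm(D',Y') · perm(D \ D', Y \ Y'). -/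
theorem ppermStar_inclusion_exclusion {R A X : Type*} [CommRing R]
    [Fintype A] [DecidableEq A] [Fintype X] [DecidableEq X]
    (M : A → X → R) (A' : Finset A) (X' : Finset X)
    (D : Finset A) (Y : Finset X) (hcard : D.card = Y.card) :
    ppermStar M A' X' D Y =
      ∑ D' ∈ (D ∩ A').powerset, ∑ Y' ∈ (Y ∩ X').powerset,
        (-1 : R) ^ D'.card * pperm M D' Y' * pperm M (D \ D') (Y \ Y') := by
  rw [ppermStar_eq_sum_permanentOn]
  refine Finset.sum_congr rfl fun D' hD' => ?_
  have hD'D : D' ⊆ D := (Finset.mem_powerset.1 hD').trans Finset.inter_subset_left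
  simp only [mul_assoc, ← Finset.mul_sum, sum_pperm_mul_pperm_sdiff M hD'D]
end

section
/- Let m be an n×n matrix over a commutative ring R. Then Σ_{σ,τ} sgn(σ)·sgn(τ)·∏_{a ∈ Fin n} m_{σ(a),τ(a)} = n! · det(m), where the sum ranges over all pairs of permutations σ, τ of Fin n. (This is the mixed discriminant of the constant list of matrices (m,…,m).) -/
/-!
For fixed `τ`, the sum over `σ` is `sgn τ` times the determinant of `m` with its columns permuted
by `τ`. That determinant is `sgn τ * det m`, so the two signs cancel and each of the `n!` choices
of `τ` contributes `det m`.
-/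

section MixedDiscriminant

open Equiv Matrix

variable {ι R : Type*} [Fintype ι] [DecidableEq ι] [CommRing R]

theorem sum_sign_mul_prod_eq_sign_mul_det (m : Matrix ι ι R) (τ : Perm ι) :
    ∑ σ : Perm ι, ((Perm.sign σ : ℤ) : R) * ∏ a, m (σ a) (τ a) =
      ((Perm.sign τ : ℤ) : R) * m.det :=
  calc
    _ = (m.submatrix id τ).det := (det_apply' (m.submatrix id τ)).symm
    _ = _ := det_permute' τ m

theorem sum_sign_mul_sign_mul_prod_eq_det (m : Matrix ι ι R) (τ : Perm ι) :
    ∑ σ : Perm ι, ((Perm.sign σ : ℤ) : R) * ((Perm.sign τ : ℤ) : R) * ∏ a, m (σ a) (τ a) =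
      m.det := by
  have sign_sq : ((Perm.sign τ : ℤ) : R) * ((Perm.sign τ : ℤ) : R) = 1 := by
    rw [← Int.cast_mul, Int.units_coe_mul_self, Int.cast_one]
  calc
    _ = ((Perm.sign τ : ℤ) : R) *
          ∑ σ : Perm ι, ((Perm.sign σ : ℤ) : R) * ∏ a, m (σ a) (τ a) := by
      simp only [Finset.mul_sum, mul_assoc, mul_left_comm]
    _ = m.det := by rw [sum_sign_mul_prod_eq_sign_mul_det, ← mul_assoc, sign_sq, one_mul]

theorem mixed_discriminant_constant_general (m : Matrix ι ι R) :
    ∑ σ : Perm ι, ∑ τ : Perm ι,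
      ((Perm.sign σ : ℤ) : R) * ((Perm.sign τ : ℤ) : R) * ∏ a, m (σ a) (τ a) =
        ((Fintype.card ι).factorial : R) * m.det := by
  rw [Finset.sum_comm]
  simp only [sum_sign_mul_sign_mul_prod_eq_det, Finset.sum_const, Finset.card_univ,
    Fintype.card_perm, nsmul_eq_mul]

end MixedDiscriminant

/-- the mixed discriminant of the constant list (m,…,m) of an n×n matrix m,
Σ_{σ,τ} sgn(σ)·sgn(τ)·∏_a m_{σ(a),τ(a)}, equals n! · det(m). -/
theorem mixed_discriminant_constant {R : Type*} [CommRing R] {n : ℕ}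
    (m : Matrix (Fin n) (Fin n) R) :
    ∑ σ : Equiv.Perm (Fin n), ∑ τ : Equiv.Perm (Fin n),
      ((Equiv.Perm.sign σ : ℤ) : R) * ((Equiv.Perm.sign τ : ℤ) : R) *
        ∏ a : Fin n, m (σ a) (τ a) = (n.factorial : R) * m.det := by
  simpa only [Fintype.card_fin] using mixed_discriminant_constant_general m
end

section
/- Let d be an n×n matrix over a commutative ring R, and for each a ∈ Fin n let M_a be the n×n diagonal matrix with (M_a)_{x,x} = d_{a,x} and (M_a)_{x,y} = 0 for x ≠ y. Then Σ_{σ,τ} sgn(σ)·sgn(τ)·∏_{a ∈ Fin n} (M_a)_{σ(a),τ(a)} = Σ_{σ} ∏_{a ∈ Fin n} d_{a,σ(a)}, where the sums range over permutations of Fin n; i.e., the mixed discriminant of the diagonal matrices (M_1,…,M_n) equals the permanent of the matrix d of concatenated diagonals. -/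
open Equiv Matrix

section

variable {ι m n R : Type*} [Fintype ι] [DecidableEq m] [Fintype n] [DecidableEq n]

theorem prod_diagonal_apply_of_ne [CommMonoidWithZero R] (d : ι → m → R) {f g : ι → m}
    (hfg : f ≠ g) : ∏ i, diagonal (d i) (f i) (g i) = 0 := by
  obtain ⟨i, hi⟩ := Function.ne_iff.mp hfg
  exact Finset.prod_eq_zero (Finset.mem_univ i) (diagonal_apply_ne (d i) hi)

theorem sum_equiv_mul_prod_diagonal_apply [CommSemiring R] [DecidableEq ι] [Fintype m]
    (d : ι → m → R) (w : (ι ≃ m) → R) (σ : ι ≃ m) :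
    ∑ τ : ι ≃ m, w τ * ∏ i, diagonal (d i) (σ i) (τ i) = w σ * ∏ i, d i (σ i) := by
  calc
    ∑ τ : ι ≃ m, w τ * ∏ i, diagonal (d i) (σ i) (τ i)
      = w σ * ∏ i, diagonal (d i) (σ i) (σ i) :=
        Fintype.sum_eq_single σ fun τ hτ ↦
          mul_eq_zero_of_right (w τ) <|
            prod_diagonal_apply_of_ne d (DFunLike.coe_injective.ne hτ.symm)
    _ = w σ * ∏ i, d i (σ i) := by simp only [diagonal_apply_eq]

theorem intCast_units_mul_self [NonAssocRing R] (u : ℤˣ) : ((u : ℤ) : R) * ((u : ℤ) : R) = 1 := by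
  rw [← Int.cast_mul, Int.units_coe_mul_self, Int.cast_one]

variable [CommRing R]

/-- The mixed discriminant of a family `M` of square matrices indexed by their own index type,
in the normalization without the factor `1 / n!`: on a constant family `M a = A` it takes the
value `n! * A.det`. -/
def mixedDiscriminant (M : n → Matrix n n R) : R :=
  ∑ σ : Perm n, ∑ τ : Perm n,
    ((Perm.sign σ : ℤ) : R) * ((Perm.sign τ : ℤ) : R) * ∏ a, M a (σ a) (τ a)

theorem mixed_discriminant_diagonal_general (d : Matrix n n R) :
    mixedDiscriminant (fun a ↦ diagonal (d a)) = d.permanent := by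
  -- `Matrix.permanent` lets permutations act on the row index, here they act on the column index.
  rw [← permanent_transpose]
  refine Finset.sum_congr rfl fun σ _ ↦ ?_
  calc
    ∑ τ : Perm n, ((Perm.sign σ : ℤ) : R) * ((Perm.sign τ : ℤ) : R) *
          ∏ a, diagonal (d a) (σ a) (τ a)
      = ((Perm.sign σ : ℤ) : R) * ((Perm.sign σ : ℤ) : R) * ∏ a, d a (σ a) :=
        sum_equiv_mul_prod_diagonal_apply d
          (fun τ ↦ ((Perm.sign σ : ℤ) : R) * ((Perm.sign τ : ℤ) : R)) σ
    _ = ∏ a, d a (σ a) := by rw [intCast_units_mul_self, one_mul]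

end

/-- the mixed discriminant of the list of diagonal matrices M_a = diagonal(d_a)
equals the permanent of the matrix d of concatenated diagonals. -/
theorem mixed_discriminant_diagonal {R : Type*} [CommRing R] {n : ℕ}
    (d : Matrix (Fin n) (Fin n) R) :
    ∑ σ : Equiv.Perm (Fin n), ∑ τ : Equiv.Perm (Fin n),
      ((Equiv.Perm.sign σ : ℤ) : R) * ((Equiv.Perm.sign τ : ℤ) : R) *
        ∏ a : Fin n, Matrix.diagonal (d a) (σ a) (τ a)
      = ∑ σ : Equiv.Perm (Fin n), ∏ a : Fin n, d a (σ a) :=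
  (mixed_discriminant_diagonal_general d).trans (permanent_transpose d).symm
end
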